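/- arXiv:2604.03615 — 2 statements merged into one kernel-verified Lean document; each statement's English description precedes it below -/
import Mathlib

section
/- Let Q = I_n + A be the signless Laplacian matrix of the directed cycle C⃗_n. Then the trace norm ‖Q‖_* = Σ_{j=0}^{n−1} 2·|cos(πj/n)| equals 2·cot(π/(2n)) when n ≥ 2 is even, and equals 2·csc(π/(2n)) when n ≥ 3 is odd. -/
open Matrix

/-- The multiset of singular values of a real square matrix `M`: the nonnegative
square roots of the eigenvalues of `M * Mᵀ` (the roots of its characteristic
polynomial, counted with multiplicity). -/
noncomputable def singularValues {m : Type*} [Fintype m] [DecidableEq m]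
    (M : Matrix m m ℝ) : Multiset ℝ :=
  ((M * Mᵀ).charpoly.roots).map Real.sqrt

/-- The trace norm of a real square matrix: the sum of its singular values. -/
noncomputable def traceNorm {m : Type*} [Fintype m] [DecidableEq m]
    (M : Matrix m m ℝ) : ℝ :=
  (singularValues M).sum

/-- Adjacency matrix of the directed cycle C⃗_n: entry (i,j) is 1 iff j ≡ i+1 (mod n). -/
def cycleAdj (n : ℕ) : Matrix (Fin n) (Fin n) ℝ :=
  fun i j => if (j : ℕ) = ((i : ℕ) + 1) % n then 1 else 0

/-- Adjacency matrix of the directed path P⃗_n: entry (i,j) is 1 iff j = i+1. -/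
def pathAdj (n : ℕ) : Matrix (Fin n) (Fin n) ℝ :=
  fun i j => if (j : ℕ) = (i : ℕ) + 1 then 1 else 0

/-- The outdegree matrix of a digraph with adjacency matrix `A`: the diagonal
matrix of row sums of `A`. -/
noncomputable def outDeg {m : Type*} [Fintype m] [DecidableEq m]
    (A : Matrix m m ℝ) : Matrix m m ℝ :=
  Matrix.diagonal (fun i => ∑ j, A i j)

/-- Adjacency matrix of the oriented star S⃗_n(x,y) on n = x+y+1 vertices:
vertex 0 is the center, vertices 1..x are the out-neighbours of the center and
vertices x+1..x+y are its in-neighbours. -/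
def starAdj (x y : ℕ) : Matrix (Fin (x + y + 1)) (Fin (x + y + 1)) ℝ :=
  fun i j =>
    if (i : ℕ) = 0 ∧ 1 ≤ (j : ℕ) ∧ (j : ℕ) ≤ x then 1
    else if (j : ℕ) = 0 ∧ x + 1 ≤ (i : ℕ) then 1 else 0

/-- Adjacency matrix of the out-star S⃗_n(n-1,0): vertex 0 is the center with
arcs to all other vertices, and there are no other arcs. -/
def outStarAdj (n : ℕ) : Matrix (Fin n) (Fin n) ℝ :=
  fun i j => if (i : ℕ) = 0 ∧ (j : ℕ) ≠ 0 then 1 else 0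

/-- Adjacency matrix of the disjoint union C⃗_{n-1} ∪ K₁: a directed (n-1)-cycle
on the first n-1 vertices together with an isolated last vertex. -/
def cycleK1Adj (n : ℕ) : Matrix (Fin n) (Fin n) ℝ :=
  fun i j =>
    if (i : ℕ) < n - 1 ∧ (j : ℕ) < n - 1 ∧ (j : ℕ) = ((i : ℕ) + 1) % (n - 1) then 1 else 0

open Matrix in
theorem aux_mul_transpose (n : ℕ) : cycleAdj n * (cycleAdj n)ᵀ = 1 := by
  ext i j
  have hn : 0 < n := i.pos
  have hi := i.isLt
  have hj := j.isLt
  rw [Matrix.mul_apply]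
  simp only [cycleAdj, Matrix.transpose_apply, Matrix.one_apply]
  rw [Finset.sum_eq_single (⟨((i : ℕ) + 1) % n, Nat.mod_lt _ hn⟩ : Fin n)]
  · simp only [if_true, one_mul]
    congr 1
    rw [eq_iff_iff, Fin.ext_iff]
    constructor
    · intro h
      have h2 : (i : ℕ) ≡ j [MOD n] := Nat.ModEq.add_right_cancel' 1 h
      exact Nat.ModEq.eq_of_lt_of_lt h2 hi hj
    · intro h; rw [h]
  · intro b _ hb
    rw [if_neg, zero_mul]
    intro h; exact hb (Fin.ext h)
  · simp

theorem aux_transpose_mul (n : ℕ) : (cycleAdj n).transpose * cycleAdj n = 1 :=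
  mul_eq_one_comm.mp (aux_mul_transpose n)

theorem aux_charpoly_conj {n : ℕ} (B F : Matrix (Fin n) (Fin n) ℂ) (d : Fin n → ℂ)
    (hF : IsUnit F) (h : B * F = F * Matrix.diagonal d) :
    B.charpoly = ∏ i, (Polynomial.X - Polynomial.C (d i)) := by
  obtain ⟨u, rfl⟩ := hF
  have : B = u.val * Matrix.diagonal d * u⁻¹.val := by
    rw [← h, mul_assoc, Units.mul_inv, mul_one]
  rw [this, Matrix.coe_units_inv, Matrix.charpoly_units_conj, Matrix.charpoly_diagonal]

theorem aux_charpoly (n : ℕ) (hn : 2 ≤ n) :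
    ((1 + cycleAdj n) * (1 + cycleAdj n).transpose).charpoly =
      ∏ j : Fin n, (Polynomial.X - Polynomial.C ((2 * Real.cos (Real.pi * (j : ℕ) / n)) ^ 2)) := by
  have hn0 : n ≠ 0 := by omega
  set w : ℂ := Complex.exp (2 * Real.pi * Complex.I / n) with hw
  have hprim : IsPrimitiveRoot w n := Complex.isPrimitiveRoot_exp n hn0
  have hw0 : w ≠ 0 := Complex.exp_ne_zero _
  let v : Fin n → ℂ := fun j => w ^ (j : ℕ)
  have hvn : ∀ j, v j ^ n = 1 := fun j => by
    simp only [v]; rw [← pow_mul, mul_comm, pow_mul, hprim.pow_eq_one, one_pow]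
  have hv0 : ∀ j, v j ≠ 0 := fun j => pow_ne_zero _ hw0
  let F : Matrix (Fin n) (Fin n) ℂ := (Matrix.vandermonde v).transpose
  have hF : IsUnit F := by
    rw [Matrix.isUnit_iff_isUnit_det, Matrix.det_transpose, isUnit_iff_ne_zero,
      Matrix.det_vandermonde_ne_zero_iff]
    intro a b hab
    exact Fin.ext (hprim.pow_inj a.isLt b.isLt hab)
  let P : Matrix (Fin n) (Fin n) ℂ := (cycleAdj n).map (algebraMap ℝ ℂ)
  have hPPt : P * P.transpose = 1 := by
    have h := congrArg (fun M => M.map (algebraMap ℝ ℂ)) (aux_mul_transpose n)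
    simp only [Matrix.map_mul, Matrix.map_one _ (map_zero (algebraMap ℝ ℂ)) (map_one _)] at h
    exact h
  have hPtP : P.transpose * P = 1 := mul_eq_one_comm.mp hPPt
  have hPF : P * F = F * Matrix.diagonal v := by
    ext i j
    have hpos : 0 < n := by omega
    rw [Matrix.mul_apply, Matrix.mul_diagonal,
      Finset.sum_eq_single (⟨((i : ℕ) + 1) % n, Nat.mod_lt _ hpos⟩ : Fin n)]
    · simp only [P, F, cycleAdj, Matrix.map_apply, Matrix.transpose_apply,
        Matrix.vandermonde_apply, if_true, map_one, one_mul]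
      rw [← pow_succ]
      exact (pow_eq_pow_mod _ (hvn j)).symm
    · intro b _ hb
      have : P i b = 0 := by
        simp only [P, cycleAdj, Matrix.map_apply]
        rw [if_neg, map_zero]
        intro h; exact hb (Fin.ext h)
      rw [this, zero_mul]
    · simp
  have hPtF : P.transpose * F = F * Matrix.diagonal (fun j => (v j)⁻¹) := by
    have h1 : F = P.transpose * F * Matrix.diagonal v := by
      rw [mul_assoc, ← hPF, ← mul_assoc, hPtP, one_mul]
    conv_rhs => rw [h1]
    rw [mul_assoc, Matrix.diagonal_mul_diagonal]
    have : (fun i => v i * (v i)⁻¹) = fun _ => 1 := by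
      funext i; exact mul_inv_cancel₀ (hv0 i)
    rw [this, Matrix.diagonal_one, mul_one]
  have key := aux_charpoly_conj ((1 + P) * (1 + P).transpose) F
    (fun j => 2 + v j + (v j)⁻¹) hF (by
      have e1 : (1 + P) * (1 + P).transpose = (1 + 1) + P + P.transpose := by
        rw [Matrix.transpose_add, Matrix.transpose_one, add_mul, mul_add, mul_add, hPPt]
        simp only [one_mul, mul_one]; abel
      have e2 : Matrix.diagonal (fun j => 2 + v j + (v j)⁻¹) =
          (1 + 1) + Matrix.diagonal v + Matrix.diagonal (fun j => (v j)⁻¹) := by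
        rw [← Matrix.diagonal_one, Matrix.diagonal_add, Matrix.diagonal_add, Matrix.diagonal_add]
        congr 1; funext j; norm_num
      rw [e1, e2, add_mul, add_mul, mul_add, mul_add, hPF, hPtF, add_mul, mul_add, one_mul, mul_one])
  apply Polynomial.map_injective (algebraMap ℝ ℂ) (algebraMap ℝ ℂ).injective
  rw [← Matrix.charpoly_map, Polynomial.map_prod]
  have e3 : ((1 + cycleAdj n) * (1 + cycleAdj n).transpose).map (algebraMap ℝ ℂ)
      = (1 + P) * (1 + P).transpose := by
    have : (1 + cycleAdj n).map (algebraMap ℝ ℂ) = 1 + P := by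
      rw [Matrix.map_add _ (by simp), Matrix.map_one _ (by simp) (by simp)]
    rw [Matrix.map_mul, Matrix.transpose_map, this]
  have e3' : (algebraMap ℝ ℂ).mapMatrix ((1 + cycleAdj n) * (1 + cycleAdj n).transpose)
      = (1 + P) * (1 + P).transpose := e3
  first
    | rw [e3, key]
    | rw [e3', key]
  apply Finset.prod_congr rfl
  intro j _
  rw [Polynomial.map_sub, Polynomial.map_X, Polynomial.map_C]
  congr 2
  have hvj : v j = Complex.exp ((Real.pi * (j : ℕ) / n : ℝ) * Complex.I) ^ 2 := by
    simp only [v, hw]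
    rw [← Complex.exp_nat_mul, ← Complex.exp_nat_mul]
    congr 1; push_cast; ring
  rw [hvj]
  simp only [Complex.coe_algebraMap]
  rw [Complex.ofReal_pow, Complex.ofReal_mul, Complex.ofReal_cos, Complex.cos, neg_mul,
    Complex.exp_neg]
  have := Complex.exp_ne_zero ((Real.pi * (j : ℕ) / n : ℝ) * Complex.I)
  generalize Complex.exp ((Real.pi * (j : ℕ) / n : ℝ) * Complex.I) = z at *
  push_cast
  field_simp
  ring

theorem aux_trace (n : ℕ) (hn : 2 ≤ n) :
    traceNorm (1 + cycleAdj n) = ∑ j ∈ Finset.range n, 2 * |Real.cos (Real.pi * j / n)| := by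
  unfold traceNorm singularValues
  rw [aux_charpoly n hn, Polynomial.roots_prod _ _
    (Finset.prod_ne_zero_iff.mpr fun a _ => Polynomial.X_sub_C_ne_zero _)]
  simp_rw [Polynomial.roots_X_sub_C]
  rw [Multiset.bind_singleton, Multiset.map_map,
    ← Fin.sum_univ_eq_sum_range (fun j => 2 * |Real.cos (Real.pi * (j : ℕ) / n)|) n]
  change ∑ j : Fin n, _ = _
  apply Finset.sum_congr rfl
  intro j _
  rw [Function.comp_apply, Real.sqrt_sq_eq_abs, abs_mul, abs_two]

theorem aux_tele (θ : ℝ) (k : ℕ) :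
    ∑ j ∈ Finset.range k, 2 * Real.sin θ * Real.cos (2 * j * θ) =
      Real.sin ((2 * k - 1) * θ) + Real.sin θ := by
  induction k with
  | zero => simp
  | succ k ih =>
    rw [Finset.sum_range_succ, ih]
    have h1 : (2 * ((k + 1 : ℕ) : ℝ) - 1) * θ = 2 * k * θ + θ := by push_cast; ring
    have h2 : (2 * (k : ℝ) - 1) * θ = 2 * k * θ - θ := by ring
    rw [h1, h2, Real.sin_add, Real.sin_sub]; ring

theorem aux_sum (n k : ℕ) (hn : 2 ≤ n) (hk : k ≤ n) (h1 : 2 * k ≤ n + 2) (h2 : n ≤ 2 * k) :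
    Real.sin (Real.pi / (2 * n)) * ∑ j ∈ Finset.range n, 2 * |Real.cos (Real.pi * j / n)| =
      2 * Real.sin ((2 * k - 1) * (Real.pi / (2 * n))) := by
  have hnR : (0 : ℝ) < n := by exact_mod_cast (by omega : 0 < n)
  have hpi := Real.pi_pos
  have harg : ∀ j : ℕ, Real.pi * j / n = 2 * j * (Real.pi / (2 * n)) := fun j => by field_simp
  have hs : ∑ j ∈ Finset.range n, 2 * |Real.cos (Real.pi * j / n)| =
      2 * ∑ j ∈ Finset.range k, 2 * Real.cos (Real.pi * j / n) -
        ∑ j ∈ Finset.range n, 2 * Real.cos (Real.pi * j / n) := by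
    rw [← Finset.sum_range_add_sum_Ico _ hk, ← Finset.sum_range_add_sum_Ico (fun j : ℕ => 2 * Real.cos (Real.pi * j / n)) hk]
    have a1 : ∑ j ∈ Finset.range k, 2 * |Real.cos (Real.pi * j / n)| =
        ∑ j ∈ Finset.range k, 2 * Real.cos (Real.pi * j / n) := by
      apply Finset.sum_congr rfl
      intro j hj
      have hj' : (2 * j : ℝ) ≤ n := by
        have := Finset.mem_range.mp hj
        exact_mod_cast (by omega : 2 * j ≤ n)
      rw [abs_of_nonneg]
      apply Real.cos_nonneg_of_neg_pi_div_two_le_of_le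
      · have : 0 ≤ Real.pi * j / n := by positivity
        linarith
      · rw [div_le_div_iff₀ hnR two_pos]; nlinarith
    have a2 : ∑ j ∈ Finset.Ico k n, 2 * |Real.cos (Real.pi * j / n)| =
        - ∑ j ∈ Finset.Ico k n, 2 * Real.cos (Real.pi * j / n) := by
      rw [← Finset.sum_neg_distrib]
      apply Finset.sum_congr rfl
      intro j hj
      have hj0 := Finset.mem_Ico.mp hj
      have hj' : (n : ℝ) ≤ 2 * j := by
        exact_mod_cast (by omega : n ≤ 2 * j)
      have hj2 : (j : ℝ) ≤ n := by exact_mod_cast hj0.2.le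
      rw [abs_of_nonpos, mul_neg]
      apply Real.cos_nonpos_of_pi_div_two_le_of_le
      · rw [div_le_div_iff₀ two_pos hnR]; nlinarith
      · have : Real.pi * j / n ≤ Real.pi := by
          rw [div_le_iff₀ hnR]; nlinarith
        linarith
    rw [a1, a2]; ring
  have hT : ∀ m : ℕ, Real.sin (Real.pi / (2 * n)) *
      ∑ j ∈ Finset.range m, 2 * Real.cos (Real.pi * j / n) =
      Real.sin ((2 * m - 1) * (Real.pi / (2 * n))) + Real.sin (Real.pi / (2 * n)) := by
    intro m
    rw [← aux_tele, Finset.mul_sum]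
    apply Finset.sum_congr rfl
    intro j _
    rw [harg]; ring
  have hlast : Real.sin ((2 * n - 1) * (Real.pi / (2 * n))) = Real.sin (Real.pi / (2 * n)) := by
    rw [← Real.sin_pi_sub]
    congr 1; field_simp; ring
  rw [hs, mul_sub, mul_left_comm, hT, hT, hlast]; ring

theorem aux_sin_pos (n : ℕ) (hn : 2 ≤ n) : 0 < Real.sin (Real.pi / (2 * n)) := by
  have hnR : (2 : ℝ) ≤ n := by exact_mod_cast hn
  have hpi := Real.pi_pos
  apply Real.sin_pos_of_pos_of_lt_pi
  · positivity
  · rw [div_lt_iff₀ (by positivity)]; nlinarith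

theorem cycle_signless_laplacian_trace_norm (n : ℕ) :
    (2 ≤ n →
      traceNorm (1 + cycleAdj n) = ∑ j ∈ Finset.range n, 2 * |Real.cos (Real.pi * j / n)|) ∧
    (2 ≤ n → Even n → traceNorm (1 + cycleAdj n) = 2 * Real.cot (Real.pi / (2 * n))) ∧
    (3 ≤ n → Odd n → traceNorm (1 + cycleAdj n) = 2 * (Real.sin (Real.pi / (2 * n)))⁻¹) := by
  refine ⟨aux_trace n, ?_, ?_⟩
  · rintro hn ⟨m, hm⟩
    have hs := aux_sin_pos n hn
    have h := aux_sum n m hn (by omega) (by omega) (by omega)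
    have hnR : (0 : ℝ) < n := by exact_mod_cast (by omega : 0 < n)
    have e : (2 * (m : ℝ) - 1) * (Real.pi / (2 * n)) = Real.pi / 2 - Real.pi / (2 * n) := by
      have : (n : ℝ) = 2 * m := by rw [hm]; push_cast; ring
      rw [← this]; field_simp
    rw [e, Real.sin_pi_div_two_sub, ← aux_trace n hn] at h
    rw [Real.cot_eq_cos_div_sin]
    field_simp
    linarith
  · rintro hn ⟨m, hm⟩
    have hs := aux_sin_pos n (by omega)
    have h := aux_sum n (m + 1) (by omega) (by omega) (by omega) (by omega)
    have hnR : (0 : ℝ) < n := by exact_mod_cast (by omega : 0 < n)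
    have e : (2 * ((m + 1 : ℕ) : ℝ) - 1) * (Real.pi / (2 * n)) = Real.pi / 2 := by
      have : (2 * ((m + 1 : ℕ) : ℝ) - 1) = n := by rw [hm]; push_cast; ring
      rw [this]; field_simp
    rw [e, Real.sin_pi_div_two, ← aux_trace n (by omega)] at h
    field_simp
    linarith
end

section
/- Let n ≥ 2 and let Q = Δ⁺ + A be the signless Laplacian matrix of the directed path P⃗_n, where A_{i,i+1} = 1 for 1 ≤ i ≤ n−1, all other entries of A are 0, and Δ⁺ = diag(1,…,1,0). Then the singular values of Q are 2·sin(πj/(2n)) for j = 0, 1, …, n−1 (the same as those of L(P⃗_n)), and ‖Q‖_* = cot(π/(4n)) − 1. -/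
open Matrix

theorem aux_ent (n : ℕ) (e : ℝ) (i j : Fin n) :
    (outDeg (pathAdj n) + e • pathAdj n) i j =
      (if (j : ℕ) = i then (if (i : ℕ) + 1 < n then 1 else 0) else 0) +
        e * (if (j : ℕ) = (i : ℕ) + 1 then 1 else 0) := by
  have h : ∑ j : Fin n, pathAdj n i j = if (i : ℕ) + 1 < n then 1 else 0 := by
    unfold pathAdj
    rw [Fin.sum_univ_eq_sum_range (fun j => if j = (i : ℕ) + 1 then (1 : ℝ) else 0) n]
    simp
  rw [Matrix.add_apply, Matrix.smul_apply, outDeg, Matrix.diagonal_apply, h]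
  by_cases hij : i = j
  · subst hij; simp [pathAdj]
  · have : ¬ (j : ℕ) = i := fun h => hij (Fin.ext h.symm)
    simp [pathAdj, hij, this]

theorem aux_mulVec (n : ℕ) (e : ℝ) (w : ℕ → ℝ) (i : Fin n) :
    ((outDeg (pathAdj n) + e • pathAdj n) *ᵥ (fun k : Fin n => w k)) i =
      if (i : ℕ) + 1 < n then w i + e * w (i + 1) else 0 := by
  have h1 : ((outDeg (pathAdj n) + e • pathAdj n) *ᵥ (fun k : Fin n => w k)) i =
    ∑ j : Fin n, ((if (j : ℕ) = i then (if (i : ℕ) + 1 < n then 1 else 0) else 0) +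
        e * (if (j : ℕ) = (i : ℕ) + 1 then 1 else 0)) * w j := by
    simp only [Matrix.mulVec, dotProduct, aux_ent]
  rw [h1, Fin.sum_univ_eq_sum_range (fun j => ((if j = (i : ℕ) then (if (i : ℕ) + 1 < n then (1 : ℝ) else 0) else 0) +
        e * (if j = (i : ℕ) + 1 then 1 else 0)) * w j) n]
  simp only [add_mul, Finset.sum_add_distrib, mul_assoc, ← Finset.mul_sum, ite_mul, one_mul, zero_mul,
    Finset.sum_ite_eq', Finset.mem_range, i.2, if_true]
  split_ifs <;> simp

theorem aux_vecT (n : ℕ) (e : ℝ) (v : ℕ → ℝ) (hv : v n = 0) (hv0 : v 0 = 0) (j : Fin n) :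
    ((outDeg (pathAdj n) + e • pathAdj n)ᵀ *ᵥ (fun k : Fin n => v (k + 1))) j =
      v (j + 1) + e * v j := by
  have h1 : ((outDeg (pathAdj n) + e • pathAdj n)ᵀ *ᵥ (fun k : Fin n => v (k + 1))) j =
    ∑ i : Fin n, ((if (j : ℕ) = i then (if (i : ℕ) + 1 < n then 1 else 0) else 0) +
        e * (if (j : ℕ) = (i : ℕ) + 1 then 1 else 0)) * v (i + 1) := by
    simp only [Matrix.mulVec, dotProduct, Matrix.transpose_apply, aux_ent]
  rw [h1, Fin.sum_univ_eq_sum_range (fun i => ((if (j : ℕ) = i then (if i + 1 < n then (1 : ℝ) else 0) else 0) +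
        e * (if (j : ℕ) = i + 1 then 1 else 0)) * v (i + 1)) n]
  simp only [add_mul, Finset.sum_add_distrib, mul_assoc, ← Finset.mul_sum, ite_mul, one_mul, zero_mul,
    Finset.sum_ite_eq, Finset.mem_range, j.2, if_true]
  congr 1
  · split_ifs with h
    · rfl
    · have : (j : ℕ) + 1 = n := by omega
      rw [this, hv]
  · congr 1
    obtain ⟨j, hj⟩ := j
    cases j with
    | zero => simp [hv0]
    | succ j =>
      simp only [Nat.add_right_cancel_iff, Finset.sum_ite_eq, Finset.mem_range]
      rw [if_pos (by omega)]

theorem aux_root (n : ℕ) (hn : 2 ≤ n) (e : ℝ) (he : e * e = 1) (j : ℕ) (hj : j < n) :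
    ((outDeg (pathAdj n) + e • pathAdj n) *
      (outDeg (pathAdj n) + e • pathAdj n)ᵀ).charpoly.IsRoot
        ((2 * Real.sin (Real.pi * j / (2 * n))) ^ 2) := by
  have hn0 : (n : ℝ) ≠ 0 := by positivity
  rw [Polynomial.IsRoot, Matrix.eval_charpoly]
  rcases Nat.eq_zero_or_pos j with rfl | hj0
  · apply Matrix.det_eq_zero_of_row_eq_zero ⟨n - 1, by omega⟩
    intro k
    have := aux_mulVec n e
      (fun m => if h : m < n then (outDeg (pathAdj n) + e • pathAdj n) k ⟨m, h⟩ else 0)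
      ⟨n - 1, by omega⟩
    rw [if_neg (by simp; omega)] at this
    simp only [Fin.is_lt, dif_pos, Fin.eta] at this
    simp only [Matrix.sub_apply, Matrix.mul_apply, Matrix.transpose_apply]
    simp only [Matrix.mulVec, dotProduct] at this
    rw [this]
    simp [Matrix.scalar_apply, Matrix.diagonal_apply]
  · set θ : ℝ := Real.pi * j / n with hθ
    have hhalf : Real.pi * j / (2 * n) = θ / 2 := by rw [hθ]; field_simp
    have hlam : (2 * Real.sin (Real.pi * j / (2 * n))) ^ 2 = 2 - 2 * Real.cos θ := by
      rw [hhalf]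
      have h1 := Real.cos_two_mul (θ / 2)
      have h2 := Real.sin_sq_add_cos_sq (θ / 2)
      rw [show 2 * (θ / 2) = θ by ring] at h1
      nlinarith
    rw [hlam]
    apply Matrix.exists_mulVec_eq_zero_iff.mp
    set v : ℕ → ℝ := fun m => (-e) ^ (m + 1) * Real.sin (m * θ) with hv
    have hvn : v n = 0 := by
      have : (n : ℝ) * θ = j * Real.pi := by rw [hθ]; field_simp
      simp [hv, this, Real.sin_nat_mul_pi]
    have hv0 : v 0 = 0 := by simp [hv]
    have hT := funext (aux_vecT n e v hvn hv0)
    refine ⟨fun k : Fin n => v (k + 1), ?_, ?_⟩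
    · intro h0
      have h := congrFun h0 ⟨0, by omega⟩
      have hs : 0 < Real.sin θ := by
        apply Real.sin_pos_of_pos_of_lt_pi
        · rw [hθ]; have := Real.pi_pos; positivity
        · rw [hθ, div_lt_iff₀ (by positivity)]
          exact mul_lt_mul_of_pos_left (by exact_mod_cast hj) Real.pi_pos
      simp only [hv, Pi.zero_apply] at h
      norm_num at h
      rcases h with h | h
      · rw [h] at he; norm_num at he
      · exact hs.ne' h
    · rw [Matrix.sub_mulVec, ← Matrix.mulVec_mulVec, hT]
      funext i
      rw [Pi.sub_apply, aux_mulVec n e (fun m => v (m + 1) + e * v m)]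
      simp only [Matrix.scalar_apply, Matrix.mulVec_diagonal, Pi.zero_apply]
      split_ifs with h
      · simp only [hv]
        push_cast
        have e1 : Real.sin (((i : ℝ) + 1 + 1) * θ) =
            2 * Real.cos θ * Real.sin (((i : ℝ) + 1) * θ) - Real.sin ((i : ℝ) * θ) := by
          have a1 : ((i : ℝ) + 1 + 1) * θ = ((i : ℝ) + 1) * θ + θ := by ring
          have a2 : (i : ℝ) * θ = ((i : ℝ) + 1) * θ - θ := by ring
          rw [a1, a2, Real.sin_add, Real.sin_sub]; ring
        rw [e1]
        generalize Real.sin (((i : ℝ) + 1) * θ) = s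
        generalize Real.sin ((i : ℝ) * θ) = t
        have e2 : (-e) ^ ((i : ℕ) + 1 + 1) = (-e) ^ (i : ℕ) := by
          rw [add_assoc, pow_add]; linear_combination (-e) ^ (i : ℕ) * he
        rw [pow_succ _ ((i : ℕ) + 1 + 1), e2, pow_succ]
        generalize (-e) ^ (i : ℕ) = p
        linear_combination (p * (2 * Real.cos θ * s - t)) * he - (p * s) * he + (p * t) * he
      · have : (i : ℕ) + 1 = n := by omega
        rw [this, hvn]; simp

theorem aux_sv (n : ℕ) (hn : 2 ≤ n) (e : ℝ) (he : e * e = 1) :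
    singularValues (outDeg (pathAdj n) + e • pathAdj n) =
      (Multiset.range n).map (fun j : ℕ => 2 * Real.sin (Real.pi * j / (2 * n))) := by
  have hn0 : (0 : ℝ) < n := by positivity
  have hpi := Real.pi_pos
  set f : ℕ → ℝ := fun j => 2 * Real.sin (Real.pi * j / (2 * n)) with hf
  have hf0 : ∀ j ∈ Multiset.range n, 0 ≤ f j := by
    intro j hj
    have hj : (j : ℝ) < n := by exact_mod_cast Multiset.mem_range.mp hj
    have : 0 ≤ Real.sin (Real.pi * j / (2 * n)) := by
      apply Real.sin_nonneg_of_nonneg_of_le_pi (by positivity)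
      rw [div_le_iff₀ (by positivity)]
      nlinarith
    simp only [hf]; positivity
  have hmono : ∀ j ∈ Multiset.range n, ∀ k ∈ Multiset.range n, f j ^ 2 = f k ^ 2 → j = k := by
    intro j hj k hk h
    have h := (sq_eq_sq₀ (hf0 j hj) (hf0 k hk)).mp h
    have hr : ∀ j ∈ Multiset.range n,
        Real.pi * j / (2 * n) ∈ Set.Icc (-(Real.pi / 2)) (Real.pi / 2) := by
      intro j hj
      have hj : (j : ℝ) < n := by exact_mod_cast Multiset.mem_range.mp hj
      constructor
      · have : 0 ≤ Real.pi * j / (2 * n) := by positivity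
        linarith
      · rw [div_le_iff₀ (by positivity)]
        nlinarith
    have h2 := Real.injOn_sin (hr j hj) (hr k hk) (by simp only [hf] at h; linarith)
    field_simp at h2
    exact_mod_cast h2
  unfold singularValues
  set P := ((outDeg (pathAdj n) + e • pathAdj n) *
      (outDeg (pathAdj n) + e • pathAdj n)ᵀ).charpoly with hP
  have hle : (Multiset.range n).map (fun j => f j ^ 2) ≤ P.roots := by
    rw [Multiset.le_iff_subset]
    · intro x hx
      obtain ⟨j, hj, rfl⟩ := Multiset.mem_map.mp hx
      rw [Polynomial.mem_roots (Matrix.charpoly_monic _).ne_zero]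
      exact aux_root n hn e he j (Multiset.mem_range.mp hj)
    · exact Multiset.Nodup.map_on hmono (Multiset.nodup_range n)
  have heq : (Multiset.range n).map (fun j => f j ^ 2) = P.roots := by
    apply Multiset.eq_of_le_of_card_le hle
    rw [Multiset.card_map, Multiset.card_range]
    refine (Polynomial.card_roots' P).trans ?_
    rw [hP, Matrix.charpoly_natDegree_eq_dim, Fintype.card_fin]
  rw [← heq, Multiset.map_map]
  apply Multiset.map_congr rfl
  intro j hj
  exact Real.sqrt_sq (hf0 j hj)

theorem aux_sum_s9 (a : ℝ) (m : ℕ) :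
    (∑ j ∈ Finset.range m, 2 * Real.sin (2 * j * a)) * Real.sin a =
      Real.cos a - Real.cos ((2 * m - 1) * a) := by
  induction m with
  | zero => simp
  | succ m ih =>
    rw [Finset.sum_range_succ, add_mul, ih]
    push_cast
    have a1 : (2 * (m : ℝ) - 1) * a = 2 * m * a - a := by ring
    have a2 : (2 * ((m : ℝ) + 1) - 1) * a = 2 * m * a + a := by ring
    rw [a1, a2, Real.cos_sub, Real.cos_add]; ring

theorem path_signless_laplacian_singular_values (n : ℕ) (hn : 2 ≤ n) :
    singularValues (outDeg (pathAdj n) + pathAdj n)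
      = (Multiset.range n).map (fun j => 2 * Real.sin (Real.pi * j / (2 * n))) ∧
    singularValues (outDeg (pathAdj n) + pathAdj n)
      = singularValues (outDeg (pathAdj n) - pathAdj n) ∧
    traceNorm (outDeg (pathAdj n) + pathAdj n) = Real.cot (Real.pi / (4 * n)) - 1 := by
  have h1 := aux_sv n hn 1 (by norm_num)
  have h2 := aux_sv n hn (-1) (by norm_num)
  rw [one_smul] at h1
  rw [neg_one_smul, ← sub_eq_add_neg] at h2
  have h0 : (Multiset.range n).map (fun j => 2 * Real.sin (Real.pi * j / (2 * n))) =
      (Multiset.range n).map (fun j : ℕ => 2 * Real.sin (Real.pi * j / (2 * n))) := by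
    simp [Multiset.bind_def, Multiset.pure_def, Multiset.bind_singleton, Multiset.map_map]
  refine ⟨h1.trans h0.symm, h1.trans h2.symm, ?_⟩
  rw [traceNorm, h1]
  have hn0 : (2 : ℝ) ≤ n := by exact_mod_cast hn
  have hpi := Real.pi_pos
  set a : ℝ := Real.pi / (4 * n) with ha
  have hs : 0 < Real.sin a := by
    apply Real.sin_pos_of_pos_of_lt_pi (by positivity)
    rw [ha, div_lt_iff₀ (by positivity)]
    nlinarith
  have h3 := aux_sum_s9 a n
  have h4 : (2 * (n : ℝ) - 1) * a = Real.pi / 2 - a := by rw [ha]; field_simp; ring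
  rw [h4, Real.cos_pi_div_two_sub] at h3
  have h5 : ((Multiset.range n).map (fun j : ℕ => 2 * Real.sin (Real.pi * j / (2 * n)))).sum =
      ∑ j ∈ Finset.range n, 2 * Real.sin (2 * j * a) := by
    change ∑ j ∈ Finset.range n, 2 * Real.sin (Real.pi * j / (2 * n)) = _
    apply Finset.sum_congr rfl
    intro j _
    congr 2
    rw [ha]; field_simp; ring
  rw [h5, Real.cot_eq_cos_div_sin, eq_sub_iff_add_eq, eq_div_iff hs.ne']
  linarith
end
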